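/- Let T1 : 𝕋 → Matrix q₁ p₁ ℂ, T2 : 𝕋 → Matrix q₁ p₂ ℂ, and T3 : 𝕋 → Matrix q₂ p₁ ℂ be continuous. Suppose U_i : 𝕋 → Matrix q₁ p₂ ℂ is continuous, inner, and in H∞, and U_o : 𝕋 → Matrix p₂ p₂ ℂ is continuous, in H∞, pointwise invertible with inverse in H∞, with T2 = U_i·U_o pointwise. Define Y := (I − U_iU_i^∼)T1. Suppose for every γ > ‖Y‖∞ we are given: a continuous pointwise-invertible Y_{o,γ} with Y_{o,γ}, Y_{o,γ}⁻¹ ∈ H∞ and Y_{o,γ}ᴴY_{o,γ} = γ²·I − YᴴY pointwise; a continuous co-inner V_{ci,γ} ∈ H∞ and continuous pointwise-invertible V_{co,γ} with V_{co,γ}, V_{co,γ}⁻¹ ∈ H∞ such that T3·Y_{o,γ}⁻¹ = V_{co,γ}·V_{ci,γ}; and, whenever Z_γ := U_i^∼·T1·Y_{o,γ}⁻¹·(I − V_{ci,γ}^∼V_{ci,γ}) satisfies ‖Z_γ‖∞ < 1, a continuous pointwise-invertible Z_{co,γ} with Z_{co,γ}, Z_{co,γ}⁻¹ ∈ H∞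 and Z_{co,γ}·Z_{co,γ}^∼ = I − Z_γ·Z_γ^∼ pointwise; set R_γ := Z_{co,γ}⁻¹·U_i^∼·T1·Y_{o,γ}⁻¹·V_{ci,γ}^∼. Then inf{‖T1 − T2·Q·T3‖∞ : Q : 𝕋 → Matrix p₂ q₂ ℂ continuous, Q ∈ H∞} = inf{γ : γ > ‖Y‖∞, ‖Z_γ‖∞ < 1, and dist(R_γ, H∞) < 1}. -/

import Mathlib

open Matrix

/-- The spectral norm (ℓ²→ℓ² operator norm, largest singular value) of a complex matrix. -/
noncomputable def specNorm {m n : Type*} [Fintype m] [Fintype n] [DecidableEq n]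
    (M : Matrix m n ℂ) : ℝ :=
  ‖LinearMap.toContinuousLinearMap (Matrix.toEuclideanLin M)‖

/-- The `H∞` norm of a matrix-valued function on the unit circle:
`‖F‖∞ = sup_{z ∈ 𝕋} ‖F(z)‖`. -/
noncomputable def hinfNorm {m n : Type*} [Fintype m] [Fintype n] [DecidableEq n]
    (F : Circle → Matrix m n ℂ) : ℝ :=
  ⨆ z : Circle, specNorm (F z)

/-- A matrix-valued function `F` on the unit circle belongs to `H∞` if there is a
matrix-valued function `G`, continuous on the closed unit disc and analytic on the open
unit disc, with `F(z) = G(z⁻¹)` for all `z` on the circle. -/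
def MemHInf {m n : Type*} (F : Circle → Matrix m n ℂ) : Prop :=
  ∃ G : ℂ → Matrix m n ℂ,
    (∀ i j, ContinuousOn (fun w => G w i j) (Metric.closedBall (0 : ℂ) 1)) ∧
    (∀ i j, AnalyticOn ℂ (fun w => G w i j) (Metric.ball (0 : ℂ) 1)) ∧
    (∀ z : Circle, F z = G ((z : ℂ)⁻¹))

/-- The distance from `R` to `H∞` in the `‖·‖∞` norm:
`dist(R, H∞) = inf { ‖R − X‖∞ : X continuous, X ∈ H∞ }`. -/
noncomputable def distHInf {m n : Type*} [Fintype m] [Fintype n] [DecidableEq n]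
    (R : Circle → Matrix m n ℂ) : ℝ :=
  sInf {c : ℝ | ∃ X : Circle → Matrix m n ℂ,
    Continuous X ∧ MemHInf X ∧ c = hinfNorm fun z => R z - X z}

/-
For `γ > 0`, `‖E‖ < γ` iff `γ² - EᴴE` is positive definite. If `U` is an isometry and
`SᴴS = γ² - ((1 - UUᴴ)E)ᴴ((1 - UUᴴ)E)`, then `γ² - EᴴE = Sᴴ(1 - WᴴW)S` with `W = UᴴES⁻¹`, so
`‖E‖ < γ` iff `‖UᴴES⁻¹‖ < 1`. For `E = T₁ - T₂QT₃` the component `(1 - UᵢUᵢᴴ)E = Y` does not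
involve `Q`, hence `‖Y‖∞ < γ` is necessary and, under it, `‖E‖∞ < γ` becomes
`‖UᵢᴴT₁Yₒ⁻¹ - (UₒQV_co)V_ci‖∞ < 1`. The dual argument removes `V_ci`, at the price of the
condition `‖Z‖∞ < 1`, and leaves `‖R - Z_co⁻¹UₒQV_co‖∞ < 1`. As `Q ↦ Z_co⁻¹UₒQV_co` is a
bijection of `H∞`, some `Q` achieves this iff `dist(R, H∞) < 1`.
-/

section SpecNorm

open scoped ComplexOrder

variable {m n : Type*} [Fintype m] [Fintype n] [DecidableEq n]

theorem specNorm_nonneg (A : Matrix m n ℂ) : 0 ≤ specNorm A :=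
  norm_nonneg _

open scoped Matrix.Norms.L2Operator in
theorem specNorm_eq_norm (A : Matrix m n ℂ) : specNorm A = ‖A‖ :=
  rfl

open scoped Matrix.Norms.L2Operator in
theorem specNorm_conjTranspose [DecidableEq m] (A : Matrix m n ℂ) : specNorm Aᴴ = specNorm A :=
  l2_opNorm_conjTranspose A

open scoped Matrix.Norms.L2Operator in
theorem continuous_specNorm : Continuous (specNorm : Matrix m n ℂ → ℝ) :=
  continuous_norm

open scoped Matrix.Norms.L2Operator MatrixOrder in
theorem specNorm_lt_iff_posDef {A : Matrix m n ℂ} {γ : ℝ} (hγ : 0 < γ) :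
    specNorm A < γ ↔ ((γ : ℂ) ^ 2 • (1 : Matrix n n ℂ) - Aᴴ * A).PosDef := by
  have hnorm : ‖Aᴴ * A‖ = ‖A‖ ^ 2 := (l2_opNorm_conjTranspose_mul_self A).trans (sq _).symm
  have hpos : 0 ≤ Aᴴ * A := (posSemidef_conjTranspose_mul_self A).nonneg
  have hscalar : (γ : ℂ) ^ 2 • (1 : Matrix n n ℂ) = algebraMap ℝ _ (γ ^ 2) := by
    rw [Algebra.algebraMap_eq_smul_one, ← Complex.ofReal_pow, Complex.coe_smul]
  rw [specNorm_eq_norm, ← sq_lt_sq₀ (norm_nonneg A) hγ.le, ← hnorm, hscalar,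
    ← isStrictlyPositive_iff_posDef]
  constructor
  · intro h
    have hle : Aᴴ * A ≤ algebraMap ℝ _ ‖Aᴴ * A‖ :=
      (IsSelfAdjoint.of_nonneg hpos).le_algebraMap_norm_self
    rw [← sub_add_sub_cancel _ (algebraMap ℝ _ ‖Aᴴ * A‖), ← map_sub]
    exact (isStrictlyPositive_algebraMap (sub_pos.2 h)).add_nonneg (sub_nonneg.2 hle)
  · intro h
    nontriviality Matrix n n ℂ using pow_pos hγ 2
    have hmem := CStarAlgebra.norm_mem_spectrum_of_nonneg hpos
    refine sub_pos.1 (h.spectrum_pos ?_)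
    rw [← spectrum.singleton_sub_eq]
    exact Set.sub_mem_sub rfl hmem

end SpecNorm

section Isometry

open scoped ComplexOrder

variable {k m n : Type*} [Fintype k] [Fintype m] [DecidableEq k] [DecidableEq m]

theorem conjTranspose_mul_self_eq_add_of_isometry {U : Matrix m k ℂ} (hU : Uᴴ * U = 1)
    (E : Matrix m n ℂ) :
    Eᴴ * E = ((1 - U * Uᴴ) * E)ᴴ * ((1 - U * Uᴴ) * E) + (Uᴴ * E)ᴴ * (Uᴴ * E) := by
  have hproj : (1 - U * Uᴴ)ᴴ * (1 - U * Uᴴ) = 1 - U * Uᴴ := by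
    have hidem : U * Uᴴ * (U * Uᴴ) = U * Uᴴ := by
      rw [Matrix.mul_assoc, ← Matrix.mul_assoc Uᴴ, hU, Matrix.one_mul]
    simp [Matrix.mul_sub, Matrix.sub_mul, hidem]
  rw [conjTranspose_mul, Matrix.mul_assoc Eᴴ, ← Matrix.mul_assoc _ _ E, hproj, conjTranspose_mul,
    conjTranspose_conjTranspose]
  simp [Matrix.sub_mul, Matrix.mul_sub, Matrix.mul_assoc]

theorem isometry_compl_mul_sub {U : Matrix m k ℂ} (hU : Uᴴ * U = 1) (T : Matrix m n ℂ)
    (K : Matrix k n ℂ) : (1 - U * Uᴴ) * (T - U * K) = (1 - U * Uᴴ) * T := by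
  have hU0 : (1 - U * Uᴴ) * U = 0 := by
    rw [Matrix.sub_mul, Matrix.mul_assoc, hU, Matrix.one_mul, Matrix.mul_one, sub_self]
  rw [Matrix.mul_sub, ← Matrix.mul_assoc _ U, hU0, Matrix.zero_mul, sub_zero]

variable [Fintype n] [DecidableEq n]

theorem specNorm_isometry_compl_mul_lt {U : Matrix m k ℂ} (hU : Uᴴ * U = 1) {E : Matrix m n ℂ}
    {γ : ℝ} (h : specNorm E < γ) : specNorm ((1 - U * Uᴴ) * E) < γ := by
  have hγ : 0 < γ := (specNorm_nonneg E).trans_lt h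
  rw [specNorm_lt_iff_posDef hγ] at h ⊢
  have hgram := conjTranspose_mul_self_eq_add_of_isometry hU E
  rw [eq_sub_of_add_eq hgram.symm, sub_sub_eq_add_sub, add_sub_right_comm]
  exact h.add_posSemidef (posSemidef_conjTranspose_mul_self _)

theorem specNorm_lt_iff_of_spectralFactor {U : Matrix m k ℂ} (hU : Uᴴ * U = 1)
    {E : Matrix m n ℂ} {S : Matrix n n ℂ} (hSunit : IsUnit S) {γ : ℝ} (hγ : 0 < γ)
    (hS : Sᴴ * S = (γ : ℂ) ^ 2 • 1 - ((1 - U * Uᴴ) * E)ᴴ * ((1 - U * Uᴴ) * E)) :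
    specNorm E < γ ↔ specNorm (Uᴴ * E * S⁻¹) < 1 := by
  have hW : Uᴴ * E * S⁻¹ * S = Uᴴ * E :=
    nonsing_inv_mul_cancel_right _ _ ((isUnit_iff_isUnit_det S).1 hSunit)
  have hcongr : (γ : ℂ) ^ 2 • 1 - Eᴴ * E
      = star S * (1 - (Uᴴ * E * S⁻¹)ᴴ * (Uᴴ * E * S⁻¹)) * S := calc
    (γ : ℂ) ^ 2 • 1 - Eᴴ * E = Sᴴ * S - (Uᴴ * E)ᴴ * (Uᴴ * E) := by
      rw [conjTranspose_mul_self_eq_add_of_isometry hU E, hS, sub_sub]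
    _ = Sᴴ * S - (Uᴴ * E * S⁻¹ * S)ᴴ * (Uᴴ * E * S⁻¹ * S) := by rw [hW]
    _ = star S * (1 - (Uᴴ * E * S⁻¹)ᴴ * (Uᴴ * E * S⁻¹)) * S := by
      rw [conjTranspose_mul (Uᴴ * E * S⁻¹), star_eq_conjTranspose]
      simp only [Matrix.mul_sub, Matrix.sub_mul, Matrix.mul_one, Matrix.mul_assoc]
  rw [specNorm_lt_iff_posDef hγ, hcongr, IsUnit.posDef_star_left_conjugate_iff hSunit,
    specNorm_lt_iff_posDef one_pos, Complex.ofReal_one, one_pow, one_smul]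

end Isometry

section Coisometry

variable {k l n : Type*} [Fintype l] [Fintype n] [DecidableEq l] [DecidableEq n]

theorem sub_mul_coisometry_compl {V : Matrix l n ℂ} (hV : V * Vᴴ = 1) (W : Matrix k n ℂ)
    (K : Matrix k l ℂ) : (W - K * V) * (1 - Vᴴ * V) = W * (1 - Vᴴ * V) := by
  simpa using congr_arg conjTranspose
    (isometry_compl_mul_sub (U := Vᴴ) (by simpa using hV) Wᴴ Kᴴ)

variable [Fintype k]

theorem specNorm_mul_coisometry_compl_lt {V : Matrix l n ℂ} (hV : V * Vᴴ = 1) {W : Matrix k n ℂ}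
    {γ : ℝ} (h : specNorm W < γ) : specNorm (W * (1 - Vᴴ * V)) < γ := by
  classical
  rw [← specNorm_conjTranspose] at h ⊢
  simpa using specNorm_isometry_compl_mul_lt (U := Vᴴ) (by simpa using hV) h

variable [DecidableEq k]

theorem specNorm_lt_one_iff_of_spectralFactor {V : Matrix l n ℂ} (hV : V * Vᴴ = 1)
    {W : Matrix k n ℂ} {S : Matrix k k ℂ} (hSunit : IsUnit S)
    (hS : S * Sᴴ = 1 - W * (1 - Vᴴ * V) * (W * (1 - Vᴴ * V))ᴴ) :
    specNorm W < 1 ↔ specNorm (S⁻¹ * W * Vᴴ) < 1 := by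
  have hdual := specNorm_lt_iff_of_spectralFactor (U := Vᴴ) (E := Wᴴ) (S := Sᴴ)
    (by simpa using hV) ((isUnit_conjTranspose S).2 hSunit) one_pos (by simpa using hS)
  rw [specNorm_conjTranspose, ← specNorm_conjTranspose (_ * _)] at hdual
  simpa [conjTranspose_nonsing_inv, Matrix.mul_assoc] using hdual

end Coisometry

section HInf

variable {k l m n : Type*}

theorem MemHInf.continuous {F : Circle → Matrix m n ℂ} (hF : MemHInf F) : Continuous F := by
  obtain ⟨G, hG, -, hFG⟩ := hF
  refine continuous_matrix fun i j => ?_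
  simp only [hFG, ← Circle.coe_inv]
  exact (hG i j).comp_continuous (by fun_prop) fun z => by
    rw [mem_closedBall_zero_iff, Circle.norm_coe]

theorem memHInf_zero : MemHInf (0 : Circle → Matrix m n ℂ) :=
  ⟨0, fun _ _ => continuousOn_const, fun _ _ => analyticOn_const, fun _ => rfl⟩

theorem MemHInf.mul [Fintype n] {F : Circle → Matrix m n ℂ} {G : Circle → Matrix n l ℂ}
    (hF : MemHInf F) (hG : MemHInf G) : MemHInf fun z => F z * G z := by
  obtain ⟨F', hFc, hFa, hF⟩ := hF
  obtain ⟨G', hGc, hGa, hG⟩ := hG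
  refine ⟨fun w => F' w * G' w, fun i j => ?_, fun i j => ?_, fun z => by simp only [hF, hG]⟩ <;>
    simp only [Matrix.mul_apply]
  · exact continuousOn_finsetSum _ fun c _ => (hFc i c).mul (hGc c j)
  · exact Finset.analyticOn_fun_sum _ fun c _ => (hFa i c).mul (hGa c j)

/-- The units of `H∞`: functions invertible in `H∞`, which is how outer factors enter the
theorem. Pointwise invertibility is recorded because the inverse of a singular matrix is `0`. -/
structure IsHInfUnit [Fintype n] [DecidableEq n] (F : Circle → Matrix n n ℂ) : Prop where
  memHInf : MemHInf F
  isUnit : ∀ z, IsUnit (F z)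
  memHInf_inv : MemHInf fun z => (F z)⁻¹

theorem IsHInfUnit.inv [Fintype n] [DecidableEq n] {A : Circle → Matrix n n ℂ}
    (hA : IsHInfUnit A) : IsHInfUnit fun z => (A z)⁻¹ where
  memHInf := hA.memHInf_inv
  isUnit z := isUnit_nonsing_inv_iff.2 (hA.isUnit z)
  memHInf_inv := by
    simpa only [nonsing_inv_nonsing_inv _ ((isUnit_iff_isUnit_det _).1 (hA.isUnit _))]
      using hA.memHInf

theorem exists_memHInf_mul_left_iff [Fintype m] [DecidableEq m] {A : Circle → Matrix m m ℂ}
    (hA : IsHInfUnit A) {p : (Circle → Matrix m n ℂ) → Prop} :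
    (∃ Q : Circle → Matrix m n ℂ, MemHInf Q ∧ p fun z => A z * Q z) ↔ ∃ X, MemHInf X ∧ p X := by
  refine ⟨fun ⟨Q, hQ, hp⟩ => ⟨_, hA.memHInf.mul hQ, hp⟩,
    fun ⟨X, hX, hp⟩ => ⟨_, hA.memHInf_inv.mul hX, ?_⟩⟩
  simpa only [mul_nonsing_inv_cancel_left _ _ ((isUnit_iff_isUnit_det _).1 (hA.isUnit _))] using hp

theorem exists_memHInf_mul_right_iff [Fintype n] [DecidableEq n] {A : Circle → Matrix n n ℂ}
    (hA : IsHInfUnit A) {p : (Circle → Matrix m n ℂ) → Prop} :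
    (∃ Q : Circle → Matrix m n ℂ, MemHInf Q ∧ p fun z => Q z * A z) ↔ ∃ X, MemHInf X ∧ p X := by
  refine ⟨fun ⟨Q, hQ, hp⟩ => ⟨_, hQ.mul hA.memHInf, hp⟩,
    fun ⟨X, hX, hp⟩ => ⟨_, hX.mul hA.memHInf_inv, ?_⟩⟩
  simpa only [nonsing_inv_mul_cancel_right _ _ ((isUnit_iff_isUnit_det _).1 (hA.isUnit _))] using hp

variable [Fintype m] [Fintype n] [DecidableEq n]

theorem hinfNorm_nonneg (F : Circle → Matrix m n ℂ) : 0 ≤ hinfNorm F :=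
  Real.iSup_nonneg fun z => specNorm_nonneg (F z)

theorem hinfNorm_lt_iff {F : Circle → Matrix m n ℂ} (hF : Continuous F) {c : ℝ} :
    hinfNorm F < c ↔ ∀ z, specNorm (F z) < c := by
  have hcont : Continuous fun z => specNorm (F z) := continuous_specNorm.comp hF
  simpa [hinfNorm, sSup_range] using
    isCompact_univ.sSup_lt_iff_of_continuous Set.univ_nonempty hcont.continuousOn c

theorem sInf_hinfNorm_lt_iff {Φ : (Circle → Matrix k l ℂ) → Circle → Matrix m n ℂ} {c : ℝ} :
    sInf {c : ℝ | ∃ Q, Continuous Q ∧ MemHInf Q ∧ c = hinfNorm (Φ Q)} < c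
      ↔ ∃ Q, MemHInf Q ∧ hinfNorm (Φ Q) < c := by
  rw [csInf_lt_iff]
  · constructor
    · rintro ⟨_, ⟨Q, -, hQ, rfl⟩, hlt⟩
      exact ⟨Q, hQ, hlt⟩
    · rintro ⟨Q, hQ, hlt⟩
      exact ⟨_, ⟨Q, hQ.continuous, hQ, rfl⟩, hlt⟩
  · exact ⟨0, by rintro _ ⟨Q, -, -, rfl⟩; exact hinfNorm_nonneg _⟩
  · exact ⟨_, 0, continuous_const, memHInf_zero, rfl⟩

theorem distHInf_lt_iff {R : Circle → Matrix m n ℂ} {c : ℝ} :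
    distHInf R < c ↔ ∃ X, MemHInf X ∧ hinfNorm (fun z => R z - X z) < c :=
  sInf_hinfNorm_lt_iff (Φ := fun X z => R z - X z)

end HInf

section ModelMatching

theorem continuous_matrix_inv_of_isUnit {X n 𝕜 : Type*} [TopologicalSpace X] [Fintype n]
    [DecidableEq n] [NormedField 𝕜] {F : X → Matrix n n 𝕜} (hF : Continuous F)
    (hunit : ∀ x, IsUnit (F x)) : Continuous fun x => (F x)⁻¹ := by
  refine continuous_iff_continuousAt.2 fun x => ?_
  have hdet : (F x).det ≠ 0 := ((isUnit_iff_isUnit_det _).1 (hunit x)).ne_zero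
  have hinv : ContinuousAt Ring.inverse (F x).det := by
    simpa only [Ring.inverse_eq_inv'] using continuousAt_inv₀ hdet
  exact (continuousAt_matrix_inv _ hinv).comp hF.continuousAt

variable {k l m n : Type*} [Fintype k] [Fintype l] [Fintype m] [Fintype n]
  [DecidableEq l] [DecidableEq m] [DecidableEq n]

theorem hinfNorm_mul_coisometry_compl_lt {V : Circle → Matrix l n ℂ} (hV : Continuous V)
    (hVV : ∀ z, V z * (V z)ᴴ = 1) {F : Circle → Matrix k n ℂ} (hF : Continuous F) {γ : ℝ}
    (h : hinfNorm F < γ) : hinfNorm (fun z => F z * (1 - (V z)ᴴ * V z)) < γ := by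
  rw [hinfNorm_lt_iff hF] at h
  rw [hinfNorm_lt_iff (by fun_prop)]
  exact fun z => specNorm_mul_coisometry_compl_lt (hVV z) (h z)

variable [DecidableEq k]

theorem hinfNorm_isometry_compl_mul_lt {U : Circle → Matrix m k ℂ} (hU : Continuous U)
    (hUU : ∀ z, (U z)ᴴ * U z = 1) {F : Circle → Matrix m n ℂ} (hF : Continuous F) {γ : ℝ}
    (h : hinfNorm F < γ) : hinfNorm (fun z => (1 - U z * (U z)ᴴ) * F z) < γ := by
  rw [hinfNorm_lt_iff hF] at h
  rw [hinfNorm_lt_iff (by fun_prop)]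
  exact fun z => specNorm_isometry_compl_mul_lt (hUU z) (h z)

theorem hinfNorm_sub_mul_lt_one_iff_of_spectralFactor {W : Circle → Matrix k n ℂ}
    (hW : Continuous W) {V : Circle → Matrix l n ℂ} (hV : Continuous V)
    (hVV : ∀ z, V z * (V z)ᴴ = 1) {D : Circle → Matrix k k ℂ} (hDc : Continuous D)
    (hDunit : ∀ z, IsUnit (D z))
    (hD : ∀ z, D z * (D z)ᴴ
      = 1 - W z * (1 - (V z)ᴴ * V z) * (W z * (1 - (V z)ᴴ * V z))ᴴ)
    {K : Circle → Matrix k l ℂ} (hK : Continuous K) :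
    hinfNorm (fun z => W z - K z * V z) < 1
      ↔ hinfNorm (fun z => (D z)⁻¹ * W z * (V z)ᴴ - (D z)⁻¹ * K z) < 1 := by
  have hDinv := continuous_matrix_inv_of_isUnit hDc hDunit
  rw [hinfNorm_lt_iff (by fun_prop), hinfNorm_lt_iff (by fun_prop)]
  refine forall_congr' fun z => ?_
  have hres : (D z)⁻¹ * (W z - K z * V z) * (V z)ᴴ
      = (D z)⁻¹ * W z * (V z)ᴴ - (D z)⁻¹ * K z := by
    simp only [Matrix.mul_sub, Matrix.sub_mul, Matrix.mul_assoc, hVV, Matrix.mul_one]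
  rw [← hres]
  exact specNorm_lt_one_iff_of_spectralFactor (hVV z) (hDunit z)
    (by rw [sub_mul_coisometry_compl (hVV z), hD z])

theorem exists_hinfNorm_sub_mul_lt_one_iff {W : Circle → Matrix k n ℂ} (hW : Continuous W)
    {V : Circle → Matrix l n ℂ} (hV : Continuous V) (hVV : ∀ z, V z * (V z)ᴴ = 1)
    {D : Circle → Matrix k k ℂ}
    (hDunit : hinfNorm (fun z => W z * (1 - (V z)ᴴ * V z)) < 1 → IsHInfUnit D)
    (hD : hinfNorm (fun z => W z * (1 - (V z)ᴴ * V z)) < 1 → ∀ z, D z * (D z)ᴴ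
      = 1 - W z * (1 - (V z)ᴴ * V z) * (W z * (1 - (V z)ᴴ * V z))ᴴ) :
    (∃ K : Circle → Matrix k l ℂ, MemHInf K ∧ hinfNorm (fun z => W z - K z * V z) < 1)
      ↔ hinfNorm (fun z => W z * (1 - (V z)ᴴ * V z)) < 1
        ∧ distHInf (fun z => (D z)⁻¹ * W z * (V z)ᴴ) < 1 := by
  have hnec : (∃ K : Circle → Matrix k l ℂ, MemHInf K ∧ hinfNorm (fun z => W z - K z * V z) < 1)
      → hinfNorm (fun z => W z * (1 - (V z)ᴴ * V z)) < 1 := by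
    rintro ⟨K, hK, hlt⟩
    have hKc := hK.continuous
    simpa only [sub_mul_coisometry_compl (hVV _)] using
      hinfNorm_mul_coisometry_compl_lt hV hVV (by fun_prop) hlt
  refine (and_iff_right_of_imp hnec).symm.trans (and_congr_right fun hZ => ?_)
  have hDu : IsHInfUnit D := hDunit hZ
  calc (∃ K : Circle → Matrix k l ℂ, MemHInf K ∧ hinfNorm (fun z => W z - K z * V z) < 1)
    _ ↔ ∃ K : Circle → Matrix k l ℂ, MemHInf K ∧
        hinfNorm (fun z => (D z)⁻¹ * W z * (V z)ᴴ - (D z)⁻¹ * K z) < 1 :=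
      exists_congr fun K => and_congr_right fun hK =>
        hinfNorm_sub_mul_lt_one_iff_of_spectralFactor hW hV hVV hDu.memHInf.continuous
          hDu.isUnit (hD hZ) hK.continuous
    _ ↔ ∃ X : Circle → Matrix k l ℂ, MemHInf X ∧
        hinfNorm (fun z => (D z)⁻¹ * W z * (V z)ᴴ - X z) < 1 :=
      exists_memHInf_mul_left_iff hDu.inv
        (p := fun X => hinfNorm (fun z => (D z)⁻¹ * W z * (V z)ᴴ - X z) < 1)
    _ ↔ distHInf (fun z => (D z)⁻¹ * W z * (V z)ᴴ) < 1 := distHInf_lt_iff.symm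

theorem hinfNorm_isometry_compl_mul_lt_of_sub_mul {T : Circle → Matrix m n ℂ} (hT : Continuous T)
    {U : Circle → Matrix m k ℂ} (hU : Continuous U) (hUU : ∀ z, (U z)ᴴ * U z = 1)
    {K : Circle → Matrix k n ℂ} (hK : Continuous K) {γ : ℝ}
    (h : hinfNorm (fun z => T z - U z * K z) < γ) :
    hinfNorm (fun z => (1 - U z * (U z)ᴴ) * T z) < γ := by
  simpa only [isometry_compl_mul_sub (hUU _)] using
    hinfNorm_isometry_compl_mul_lt hU hUU (by fun_prop) h

theorem hinfNorm_sub_mul_lt_iff_of_spectralFactor {T : Circle → Matrix m n ℂ} (hT : Continuous T)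
    {U : Circle → Matrix m k ℂ} (hU : Continuous U) (hUU : ∀ z, (U z)ᴴ * U z = 1)
    {S : Circle → Matrix n n ℂ} (hSc : Continuous S) (hSunit : ∀ z, IsUnit (S z))
    {γ : ℝ} (hγ : 0 < γ)
    (hS : ∀ z, (S z)ᴴ * S z
      = (γ : ℂ) ^ 2 • 1 - ((1 - U z * (U z)ᴴ) * T z)ᴴ * ((1 - U z * (U z)ᴴ) * T z))
    {K : Circle → Matrix k n ℂ} (hK : Continuous K) :
    hinfNorm (fun z => T z - U z * K z) < γ
      ↔ hinfNorm (fun z => (U z)ᴴ * T z * (S z)⁻¹ - K z * (S z)⁻¹) < 1 := by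
  have hSinv := continuous_matrix_inv_of_isUnit hSc hSunit
  rw [hinfNorm_lt_iff (by fun_prop), hinfNorm_lt_iff (by fun_prop)]
  refine forall_congr' fun z => ?_
  have hres : (U z)ᴴ * (T z - U z * K z) * (S z)⁻¹
      = (U z)ᴴ * T z * (S z)⁻¹ - K z * (S z)⁻¹ := by
    rw [Matrix.mul_sub, ← Matrix.mul_assoc _ (U z), hUU, Matrix.one_mul, Matrix.sub_mul]
  rw [← hres]
  exact specNorm_lt_iff_of_spectralFactor (hUU z) (hSunit z) hγ
    (by rw [isometry_compl_mul_sub (hUU z), hS z])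

theorem exists_hinfNorm_sub_mul_mul_lt_iff {T₁ : Circle → Matrix m n ℂ} (hT₁ : Continuous T₁)
    {T₃ : Circle → Matrix l n ℂ} (hT₃ : Continuous T₃) {U : Circle → Matrix m k ℂ}
    (hU : Continuous U) (hUU : ∀ z, (U z)ᴴ * U z = 1)
    {A : Circle → Matrix k k ℂ} (hA : IsHInfUnit A)
    {S : Circle → Matrix n n ℂ} (hSc : Continuous S) (hSunit : ∀ z, IsUnit (S z))
    {γ : ℝ} (hγ : 0 < γ)
    (hS : ∀ z, (S z)ᴴ * S z
      = (γ : ℂ) ^ 2 • 1 - ((1 - U z * (U z)ᴴ) * T₁ z)ᴴ * ((1 - U z * (U z)ᴴ) * T₁ z))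
    {B : Circle → Matrix l l ℂ} (hB : IsHInfUnit B) {V : Circle → Matrix l n ℂ}
    (hBV : ∀ z, T₃ z * (S z)⁻¹ = B z * V z) :
    (∃ Q : Circle → Matrix k l ℂ, MemHInf Q ∧
        hinfNorm (fun z => T₁ z - U z * A z * Q z * T₃ z) < γ)
      ↔ ∃ K : Circle → Matrix k l ℂ, MemHInf K ∧
        hinfNorm (fun z => (U z)ᴴ * T₁ z * (S z)⁻¹ - K z * V z) < 1 := by
  calc (∃ Q : Circle → Matrix k l ℂ, MemHInf Q ∧
        hinfNorm (fun z => T₁ z - U z * A z * Q z * T₃ z) < γ)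
    _ ↔ ∃ Q : Circle → Matrix k l ℂ, MemHInf Q ∧
        hinfNorm (fun z => T₁ z - U z * (A z * Q z * T₃ z)) < γ := by
      simp only [Matrix.mul_assoc]
    _ ↔ ∃ X : Circle → Matrix k l ℂ, MemHInf X ∧
        hinfNorm (fun z => T₁ z - U z * (X z * T₃ z)) < γ :=
      exists_memHInf_mul_left_iff hA
        (p := fun X => hinfNorm (fun z => T₁ z - U z * (X z * T₃ z)) < γ)
    _ ↔ ∃ X : Circle → Matrix k l ℂ, MemHInf X ∧
        hinfNorm (fun z => (U z)ᴴ * T₁ z * (S z)⁻¹ - X z * T₃ z * (S z)⁻¹) < 1 :=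
      exists_congr fun X => and_congr_right fun hX =>
        hinfNorm_sub_mul_lt_iff_of_spectralFactor hT₁ hU hUU hSc hSunit hγ hS
          (hX.continuous.matrix_mul hT₃)
    _ ↔ ∃ X : Circle → Matrix k l ℂ, MemHInf X ∧
        hinfNorm (fun z => (U z)ᴴ * T₁ z * (S z)⁻¹ - X z * B z * V z) < 1 := by
      simp only [Matrix.mul_assoc, hBV]
    _ ↔ _ :=
      exists_memHInf_mul_right_iff hB
        (p := fun K => hinfNorm (fun z => (U z)ᴴ * T₁ z * (S z)⁻¹ - K z * V z) < 1)

end ModelMatching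

theorem hinf_1984_general_optimal_general {k l m n : Type*} [Fintype k] [Fintype l] [Fintype m]
    [Fintype n] [DecidableEq k] [DecidableEq l] [DecidableEq m] [DecidableEq n]
    (T1 : Circle → Matrix m n ℂ) (hT1 : Continuous T1) (T2 : Circle → Matrix m k ℂ)
    (T3 : Circle → Matrix l n ℂ) (hT3 : Continuous T3)
    (Ui : Circle → Matrix m k ℂ) (hUic : Continuous Ui) (hUiInner : ∀ z, (Ui z)ᴴ * Ui z = 1)
    (Uo : Circle → Matrix k k ℂ) (hUo : IsHInfUnit Uo) (hT2fact : ∀ z, T2 z = Ui z * Uo z)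
    (Y : Circle → Matrix m n ℂ) (hY : Y = fun z => (1 - Ui z * (Ui z)ᴴ) * T1 z)
    (Yo : ℝ → Circle → Matrix n n ℂ) (hYoc : ∀ γ, hinfNorm Y < γ → Continuous (Yo γ))
    (hYoUnit : ∀ γ, hinfNorm Y < γ → ∀ z, IsUnit (Yo γ z))
    (hYofact : ∀ γ, hinfNorm Y < γ → ∀ z, (Yo γ z)ᴴ * Yo γ z
      = (γ : ℂ) ^ 2 • 1 - (Y z)ᴴ * Y z)
    (Vci : ℝ → Circle → Matrix l n ℂ) (hVcic : ∀ γ, hinfNorm Y < γ → Continuous (Vci γ))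
    (hVciCoInner : ∀ γ, hinfNorm Y < γ → ∀ z, Vci γ z * (Vci γ z)ᴴ = 1)
    (Vco : ℝ → Circle → Matrix l l ℂ) (hVco : ∀ γ, hinfNorm Y < γ → IsHInfUnit (Vco γ))
    (hT3fact : ∀ γ, hinfNorm Y < γ → ∀ z, T3 z * (Yo γ z)⁻¹ = Vco γ z * Vci γ z)
    (Z : ℝ → Circle → Matrix k n ℂ)
    (hZ : Z = fun γ z => (Ui z)ᴴ * T1 z * (Yo γ z)⁻¹ * (1 - (Vci γ z)ᴴ * Vci γ z))
    (Zco : ℝ → Circle → Matrix k k ℂ)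
    (hZco : ∀ γ, hinfNorm Y < γ → hinfNorm (Z γ) < 1 → IsHInfUnit (Zco γ))
    (hZcofact : ∀ γ, hinfNorm Y < γ → hinfNorm (Z γ) < 1 → ∀ z, Zco γ z * (Zco γ z)ᴴ
      = 1 - Z γ z * (Z γ z)ᴴ)
    (R : ℝ → Circle → Matrix k l ℂ)
    (hR : R = fun γ z => (Zco γ z)⁻¹ * (Ui z)ᴴ * T1 z * (Yo γ z)⁻¹ * (Vci γ z)ᴴ) :
    sInf {c : ℝ | ∃ Q : Circle → Matrix k l ℂ,
        Continuous Q ∧ MemHInf Q ∧ c = hinfNorm fun z => T1 z - T2 z * Q z * T3 z}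
      = sInf {γ : ℝ | hinfNorm Y < γ ∧ hinfNorm (Z γ) < 1 ∧ distHInf (R γ) < 1} := by
  obtain rfl : T2 = fun z => Ui z * Uo z := funext hT2fact
  subst hY hZ hR
  set μ := sInf {c : ℝ | ∃ Q : Circle → Matrix k l ℂ, Continuous Q ∧ MemHInf Q ∧
    c = hinfNorm fun z => T1 z - Ui z * Uo z * Q z * T3 z}
  have hμ {γ : ℝ} : μ < γ ↔ ∃ Q : Circle → Matrix k l ℂ, MemHInf Q ∧
      hinfNorm (fun z => T1 z - Ui z * Uo z * Q z * T3 z) < γ :=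
    sInf_hinfNorm_lt_iff
      (Φ := fun (Q : Circle → Matrix k l ℂ) z => T1 z - Ui z * Uo z * Q z * T3 z)
  have hnec {γ : ℝ} (h : μ < γ) : hinfNorm (fun z => (1 - Ui z * (Ui z)ᴴ) * T1 z) < γ := by
    obtain ⟨Q, hQ, hlt⟩ := hμ.1 h
    refine hinfNorm_isometry_compl_mul_lt_of_sub_mul hT1 hUic hUiInner
      ((hUo.memHInf.mul hQ).continuous.matrix_mul hT3) ?_
    simpa only [Matrix.mul_assoc] using hlt
  refine csInf_Ioi.symm.trans (congrArg sInf (Set.ext fun γ => ?_))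
  refine (and_iff_right_of_imp hnec).symm.trans (and_congr_right fun hγ => ?_)
  have hYoInv := continuous_matrix_inv_of_isUnit (hYoc γ hγ) (hYoUnit γ hγ)
  rw [hμ, exists_hinfNorm_sub_mul_mul_lt_iff hT1 hT3 hUic hUiInner hUo (hYoc γ hγ) (hYoUnit γ hγ)
      ((hinfNorm_nonneg _).trans_lt hγ) (hYofact γ hγ) (hVco γ hγ) (hT3fact γ hγ),
    exists_hinfNorm_sub_mul_lt_one_iff (by fun_prop) (hVcic γ hγ) (hVciCoInner γ hγ) (hZco γ hγ)
      (hZcofact γ hγ)]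
  simp only [Matrix.mul_assoc]

/-- "1984" H∞ control, general `T3` case (Theorem 2, part 1):
`inf { ‖T1 − T2 Q T3‖∞ : Q ∈ H∞ }
  = inf { γ : γ > ‖Y‖∞, ‖Z_γ‖∞ < 1, dist(R_γ, H∞) < 1 }`. -/
theorem hinf_1984_general_optimal (q1 q2 p1 p2 : ℕ)
    (T1 : Circle → Matrix (Fin q1) (Fin p1) ℂ) (hT1 : Continuous T1)
    (T2 : Circle → Matrix (Fin q1) (Fin p2) ℂ) (hT2 : Continuous T2)
    (T3 : Circle → Matrix (Fin q2) (Fin p1) ℂ) (hT3 : Continuous T3)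
    (Ui : Circle → Matrix (Fin q1) (Fin p2) ℂ) (hUic : Continuous Ui)
    (hUiInner : ∀ z, (Ui z)ᴴ * Ui z = 1) (hUiH : MemHInf Ui)
    (Uo : Circle → Matrix (Fin p2) (Fin p2) ℂ) (hUoc : Continuous Uo)
    (hUoH : MemHInf Uo) (hUoUnit : ∀ z, IsUnit (Uo z))
    (hUoInvH : MemHInf fun z => (Uo z)⁻¹)
    (hT2fact : ∀ z, T2 z = Ui z * Uo z)
    (Y : Circle → Matrix (Fin q1) (Fin p1) ℂ)
    (hY : Y = fun z => (1 - Ui z * (Ui z)ᴴ) * T1 z)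
    (Yo : ℝ → Circle → Matrix (Fin p1) (Fin p1) ℂ)
    (hYoc : ∀ γ, hinfNorm Y < γ → Continuous (Yo γ))
    (hYoUnit : ∀ γ, hinfNorm Y < γ → ∀ z, IsUnit (Yo γ z))
    (hYoH : ∀ γ, hinfNorm Y < γ → MemHInf (Yo γ))
    (hYoInvH : ∀ γ, hinfNorm Y < γ → MemHInf fun z => (Yo γ z)⁻¹)
    (hYofact : ∀ γ, hinfNorm Y < γ → ∀ z, (Yo γ z)ᴴ * Yo γ z
      = ((γ : ℂ) ^ 2) • (1 : Matrix (Fin p1) (Fin p1) ℂ) - (Y z)ᴴ * Y z)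
    (Vci : ℝ → Circle → Matrix (Fin q2) (Fin p1) ℂ)
    (hVcic : ∀ γ, hinfNorm Y < γ → Continuous (Vci γ))
    (hVciH : ∀ γ, hinfNorm Y < γ → MemHInf (Vci γ))
    (hVciCoInner : ∀ γ, hinfNorm Y < γ → ∀ z, Vci γ z * (Vci γ z)ᴴ = 1)
    (Vco : ℝ → Circle → Matrix (Fin q2) (Fin q2) ℂ)
    (hVcoc : ∀ γ, hinfNorm Y < γ → Continuous (Vco γ))
    (hVcoH : ∀ γ, hinfNorm Y < γ → MemHInf (Vco γ))
    (hVcoUnit : ∀ γ, hinfNorm Y < γ → ∀ z, IsUnit (Vco γ z))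
    (hVcoInvH : ∀ γ, hinfNorm Y < γ → MemHInf fun z => (Vco γ z)⁻¹)
    (hT3fact : ∀ γ, hinfNorm Y < γ → ∀ z, T3 z * (Yo γ z)⁻¹ = Vco γ z * Vci γ z)
    (Z : ℝ → Circle → Matrix (Fin p2) (Fin p1) ℂ)
    (hZ : Z = fun γ z => (Ui z)ᴴ * T1 z * (Yo γ z)⁻¹ * (1 - (Vci γ z)ᴴ * Vci γ z))
    (Zco : ℝ → Circle → Matrix (Fin p2) (Fin p2) ℂ)
    (hZcoc : ∀ γ, hinfNorm Y < γ → hinfNorm (Z γ) < 1 → Continuous (Zco γ))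
    (hZcoUnit : ∀ γ, hinfNorm Y < γ → hinfNorm (Z γ) < 1 → ∀ z, IsUnit (Zco γ z))
    (hZcoH : ∀ γ, hinfNorm Y < γ → hinfNorm (Z γ) < 1 → MemHInf (Zco γ))
    (hZcoInvH : ∀ γ, hinfNorm Y < γ → hinfNorm (Z γ) < 1 →
      MemHInf fun z => (Zco γ z)⁻¹)
    (hZcofact : ∀ γ, hinfNorm Y < γ → hinfNorm (Z γ) < 1 → ∀ z, Zco γ z * (Zco γ z)ᴴ
      = (1 : Matrix (Fin p2) (Fin p2) ℂ) - Z γ z * (Z γ z)ᴴ)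
    (R : ℝ → Circle → Matrix (Fin p2) (Fin q2) ℂ)
    (hR : R = fun γ z => (Zco γ z)⁻¹ * (Ui z)ᴴ * T1 z * (Yo γ z)⁻¹ * (Vci γ z)ᴴ) :
    sInf {c : ℝ | ∃ Q : Circle → Matrix (Fin p2) (Fin q2) ℂ,
        Continuous Q ∧ MemHInf Q ∧ c = hinfNorm fun z => T1 z - T2 z * Q z * T3 z}
      = sInf {γ : ℝ | hinfNorm Y < γ ∧ hinfNorm (Z γ) < 1 ∧ distHInf (R γ) < 1} := by
  exact hinf_1984_general_optimal_general T1 hT1 T2 T3 hT3 Ui hUic hUiInner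
    Uo ⟨hUoH, hUoUnit, hUoInvH⟩ hT2fact Y hY Yo hYoc hYoUnit hYofact Vci hVcic hVciCoInner
    Vco (fun γ hγ => ⟨hVcoH γ hγ, hVcoUnit γ hγ, hVcoInvH γ hγ⟩) hT3fact Z hZ
    Zco (fun γ hγ hZγ => ⟨hZcoH γ hγ hZγ, hZcoUnit γ hγ hZγ, hZcoInvH γ hγ hZγ⟩) hZcofact R hR
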